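/- Let g be piecewise quadratic with breakpoints -∞ = τ₀ < ... < τ_N = +∞ and strongly convex pieces p₁, ..., p_N satisfying g(α) = min_{1 ≤ k ≤ N} p_k(α) for all α (consistency). For β ∈ ℝ, suppose α*(β) ∈ argmax_α {βα - g(α)} with τ_{k*-1} ≤ α*(β) ≤ τ_{k*}, and suppose consecutive pieces are not identical as polynomials. Then α*(β) ∉ {τ_{k*-1}, τ_{k*}}, i.e., the maximizer lies strictly inside the piece interval. -/

import Mathlib

/-!
A piece agreeing with `g` at a local maximizer `t` of `α ↦ βα - g α` lies above `g` and touches it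
at `t`, so Fermat's theorem gives it slope `β` there. If `t` were a breakpoint, the two adjacent
pieces would have equal value and slope at `t`, hence differ by a multiple of `(α - t) ^ 2`, whose
sign is constant. But the left piece is the smaller one on the left interval and the right piece is
the smaller one on the right interval, so that multiple is zero.
-/

open scoped Topology

section DoubleRoot

variable {R : Type*} [CommRing R] {a b c t : R}

theorem quadratic_eq_mul_sub_sq (hval : a * t ^ 2 + b * t + c = 0) (hderiv : 2 * a * t + b = 0)
    (x : R) : a * x ^ 2 + b * x + c = a * (x - t) ^ 2 := by
  linear_combination hval + (x - t) * hderiv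

variable [LinearOrder R] [IsStrictOrderedRing R]

theorem quadratic_coeffs_eq_zero_of_double_root {l r : R}
    (hval : a * t ^ 2 + b * t + c = 0) (hderiv : 2 * a * t + b = 0)
    (hlt : l ≠ t) (hl : a * l ^ 2 + b * l + c ≤ 0)
    (hrt : r ≠ t) (hr : 0 ≤ a * r ^ 2 + b * r + c) :
    a = 0 ∧ b = 0 ∧ c = 0 := by
  rw [quadratic_eq_mul_sub_sq hval hderiv] at hl hr
  have ha : a = 0 := le_antisymm
    (nonpos_of_mul_nonpos_left hl (sq_pos_of_ne_zero (sub_ne_zero.2 hlt)))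
    (nonneg_of_mul_nonneg_left hr (sq_pos_of_ne_zero (sub_ne_zero.2 hrt)))
  have hb : b = 0 := by simpa [ha] using hderiv
  have hc : c = 0 := by simpa [ha, hb] using hval
  exact ⟨ha, hb, hc⟩

end DoubleRoot

theorem hasDerivAt_eq_of_isLocalMax_sub_of_le {f g p : ℝ → ℝ} {f' p' t : ℝ}
    (hf : HasDerivAt f f' t) (hp : HasDerivAt p p' t) (hmax : IsLocalMax (fun x ↦ f x - g x) t)
    (hle : g ≤ᶠ[𝓝 t] p) (heq : g t = p t) : p' = f' := by
  have hmax' : IsLocalMax (fun x ↦ f x - p x) t := by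
    filter_upwards [hmax, hle] with x hx hgp
    linarith
  exact (sub_eq_zero.1 (hmax'.hasDerivAt_eq_zero (hf.sub hp))).symm

theorem hasDerivAt_quadratic (a b c t : ℝ) :
    HasDerivAt (fun x ↦ a * x ^ 2 + b * x + c) (2 * a * t + b) t := by
  have hsum := (((hasDerivAt_pow 2 t).const_mul a).add (hasDerivAt_const_mul b)).add_const c
  exact hsum.congr_deriv (by norm_num; ring)

theorem quadratic_majorant_coeffs_eq_of_isLocalMax {g : ℝ → ℝ} {a b c a' b' c' β t l r : ℝ}
    (hmax : IsLocalMax (fun x ↦ β * x - g x) t)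
    (hle : ∀ x, g x ≤ a * x ^ 2 + b * x + c) (hle' : ∀ x, g x ≤ a' * x ^ 2 + b' * x + c')
    (ht : g t = a * t ^ 2 + b * t + c) (ht' : g t = a' * t ^ 2 + b' * t + c')
    (hlt : l ≠ t) (hl : g l = a * l ^ 2 + b * l + c)
    (hrt : r ≠ t) (hr : g r = a' * r ^ 2 + b' * r + c') :
    (a, b, c) = (a', b', c') := by
  have hlin : HasDerivAt (fun x ↦ β * x) β t := hasDerivAt_const_mul β
  have hslope : 2 * a * t + b = β :=
    hasDerivAt_eq_of_isLocalMax_sub_of_le hlin (hasDerivAt_quadratic a b c t) hmax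
      (.of_forall hle) ht
  have hslope' : 2 * a' * t + b' = β :=
    hasDerivAt_eq_of_isLocalMax_sub_of_le hlin (hasDerivAt_quadratic a' b' c' t) hmax
      (.of_forall hle') ht'
  obtain ⟨ha, hb, hc⟩ : a - a' = 0 ∧ b - b' = 0 ∧ c - c' = 0 :=
    quadratic_coeffs_eq_zero_of_double_root (t := t) (by linarith) (by linarith)
      hlt (by linarith [hle' l]) hrt (by linarith [hle r])
  rw [sub_eq_zero.1 ha, sub_eq_zero.1 hb, sub_eq_zero.1 hc]

theorem stmt_13_general {N : ℕ} {τ : Fin (N + 1) → EReal} (hτ : StrictMono τ)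
    (hτ0 : τ 0 = ⊥) (hτN : τ (Fin.last N) = ⊤) {a b c : Fin N → ℝ} {g : ℝ → ℝ}
    (hagree : ∀ (k : Fin N) (α : ℝ), τ k.castSucc ≤ (α : EReal) → (α : EReal) ≤ τ k.succ →
      g α = a k * α ^ 2 + b k * α + c k)
    (hmin : ∀ (α : ℝ) (k : Fin N), g α ≤ a k * α ^ 2 + b k * α + c k)
    (hdist : ∀ i j : Fin N, (i : ℕ) + 1 = (j : ℕ) → (a i, b i, c i) ≠ (a j, b j, c j))
    {β t : ℝ} (hmax : IsLocalMax (fun α ↦ β * α - g α) t) (m : Fin (N + 1)) :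
    (t : EReal) ≠ τ m := by
  intro htm
  have hm0 : m ≠ 0 := by
    rintro rfl
    exact EReal.coe_ne_bot t (htm.trans hτ0)
  have hmN : m ≠ Fin.last N := by
    rintro rfl
    exact EReal.coe_ne_top t (htm.trans hτN)
  obtain ⟨i, hi⟩ := Fin.exists_succ_eq.2 hm0
  obtain ⟨j, hj⟩ := Fin.exists_castSucc_eq.2 hmN
  have hti : (t : EReal) = τ i.succ := hi ▸ htm
  have htj : (t : EReal) = τ j.castSucc := hj ▸ htm
  have hleft : τ i.castSucc < t := hti ▸ hτ i.castSucc_lt_succ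
  have hright : t < τ j.succ := htj ▸ hτ j.castSucc_lt_succ
  obtain ⟨l, hl, hlt⟩ := EReal.lt_iff_exists_real_btwn.1 hleft
  obtain ⟨r, htr, hr⟩ := EReal.lt_iff_exists_real_btwn.1 hright
  exact hdist i j (congrArg Fin.val (hi.trans hj.symm)) <|
    quadratic_majorant_coeffs_eq_of_isLocalMax hmax (hmin · i) (hmin · j)
      (hagree i t hleft.le hti.le) (hagree j t htj.ge hright.le)
      (EReal.coe_lt_coe_iff.1 hlt).ne (hagree i l hl.le (hlt.le.trans hti.le))
      (EReal.coe_lt_coe_iff.1 htr).ne' (hagree j r (htj.ge.trans htr.le) hr.le)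

/-- For a consistent piecewise quadratic `g` (strongly convex quadratic pieces,
`g = min` of the pieces, adjacent pieces non-identical), any maximizer of
`βα - g(α)` lying in the `k*`-th piece interval lies strictly inside it. -/
theorem stmt_13 (N : ℕ) (hN : 0 < N)
    (τ : Fin (N + 1) → EReal) (hτ : StrictMono τ)
    (hτ0 : τ 0 = ⊥) (hτN : τ (Fin.last N) = ⊤)
    (a b c : Fin N → ℝ) (ha : ∀ k, 0 < a k)
    (g : ℝ → ℝ)
    (hagree : ∀ (k : Fin N) (α : ℝ), τ k.castSucc ≤ (α : EReal) → (α : EReal) ≤ τ k.succ →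
      g α = a k * α ^ 2 + b k * α + c k)
    (hmin : ∀ (α : ℝ) (k : Fin N), g α ≤ a k * α ^ 2 + b k * α + c k)
    (hdist : ∀ i j : Fin N, (i : ℕ) + 1 = (j : ℕ) → (a i, b i, c i) ≠ (a j, b j, c j))
    (β αstar : ℝ) (kstar : Fin N)
    (hopt : ∀ α : ℝ, β * α - g α ≤ β * αstar - g αstar)
    (hlo : τ kstar.castSucc ≤ (αstar : EReal)) (hhi : (αstar : EReal) ≤ τ kstar.succ) :
    (αstar : EReal) ≠ τ kstar.castSucc ∧ (αstar : EReal) ≠ τ kstar.succ :=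
  have hne := stmt_13_general hτ hτ0 hτN hagree hmin hdist (.of_forall hopt)
  ⟨hne _, hne _⟩
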